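/- Define events as an inductive type Event with constructors issue (r : ℕ) and redeem (r : ℕ), and define validity of a trace relative to a pool S : Finset ℕ recursively by: Valid S [] holds; Valid S (issue r :: t) holds iff Valid (insert r S) t holds; Valid S (redeem r :: t) holds iff r ∈ S and Valid (S.erase r) t holds. If t : List Event satisfies Valid ∅ t and every token value is issued at most once in t (for every r, the number of occurrences of (issue r) in t is at most 1), then every token value is redeemed at most once in t: for every r, the number of occurrences of (redeem r) in t is at most 1. -/

import Mathlib

/-!
A redemption of `r` removes `r` from the pool, and only an issuance can put it back, so for each
token the redemptions in a valid trace never outnumber the issuances plus the copy (if any) in the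
starting pool. This is `count_redeem_le`, by induction on the trace with the pool generalized;
from the empty pool, at most one issuance then allows at most one redemption.
-/

/-- Events on the freshness-token pool. -/
inductive Event where
  | issue (r : ℕ) : Event
  | redeem (r : ℕ) : Event
deriving DecidableEq

/-- Validity of a trace relative to a pool `S` of outstanding freshness tokens:
issuance inserts the token, redemption requires membership and erases it. -/
def Valid : Finset ℕ → List Event → Prop
  | _, [] => True
  | S, (Event.issue r) :: t => Valid (insert r S) t
  | S, (Event.redeem r) :: t => r ∈ S ∧ Valid (S.erase r) t

/-- Conservation bound: along a valid trace, every redemption of `r` uses up either an issuance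
of `r` or the copy of `r` already in the initial pool. -/
theorem count_redeem_le (r : ℕ) (t : List Event) : ∀ S : Finset ℕ, Valid S t →
    t.count (Event.redeem r) ≤ t.count (Event.issue r) + if r ∈ S then 1 else 0 := by
  induction t with
  | nil => simp
  | cons e t ih =>
    intro S h
    cases e with
    | issue a =>
      have h' := ih _ h
      by_cases ha : a = r
      · subst ha
        simp at h' ⊢
        omega
      · simpa [List.count_cons, ha, Ne.symm ha] using h'
    | redeem a =>
      obtain ⟨hm, hv⟩ := h
      have h' := ih _ hv
      by_cases ha : a = r
      · subst ha
        simpa [hm] using h'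
      · simpa [List.count_cons, ha, Ne.symm ha] using h'

/-- Single-use (replay resistance): in a valid trace from the empty pool in which
every token value is issued at most once, every token value is redeemed at most once. -/
theorem count_redeem_le_one (t : List Event) (ht : Valid ∅ t)
    (hissue : ∀ r : ℕ, t.count (Event.issue r) ≤ 1) :
    ∀ r : ℕ, t.count (Event.redeem r) ≤ 1 := by
  intro r
  have h := count_redeem_le r t ∅ ht
  simp only [Finset.notMem_empty, if_false, add_zero] at h
  exact h.trans (hissue r)
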